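/- Under Assumption 1, for any step size η ∈ (0, η₀) (where η₀ ∈ (0,1) is the threshold below which the PRLMC chain has a unique stationary distribution π_η) and any initial state X̃_0 = x ∈ ℝ^d, there exists a constant δ > 1 depending on η such that Σ_{n=1}^∞ δ^n · d_TV(L(X̃_n), π_η) < ∞; consequently the total variation distance satisfies d_TV(L(X̃_n), π_η) = o(δ^{−n}) as n → ∞. -/

import Mathlib

open MeasureTheory ProbabilityTheory Filter
open scoped ENNReal NNReal RealInnerProductSpace Topology BigOperators

noncomputable section

/-- Euclidean space `ℝ^d`. -/
abbrev Euc (d : ℕ) : Type := EuclideanSpace ℝ (Fin d)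

/-- Assumption 1: `U` is `C¹`, `m`-strongly convex and `L`-gradient Lipschitz
(expressed through the two-sided quadratic bound), with `∇U(0) = 0`. -/
def StrongAssumption {d : ℕ} (U : Euc d → ℝ) (m L : ℝ) : Prop :=
  ContDiff ℝ 1 U ∧ 0 < m ∧ m ≤ L ∧
  (∀ x y : Euc d,
    m / 2 * ‖x - y‖ ^ 2 ≤ U y - U x - ⟪gradient U x, y - x⟫ ∧
    U y - U x - ⟪gradient U x, y - x⟫ ≤ L / 2 * ‖x - y‖ ^ 2) ∧
  gradient U 0 = 0

/-- Assumption 3: `U` is `C³` with third derivative uniformly bounded by `Lt`. -/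
def ThirdDerivBounded {d : ℕ} (U : Euc d → ℝ) (Lt : ℝ) : Prop :=
  ContDiff ℝ 3 U ∧ ∀ x : Euc d, ‖iteratedFDeriv ℝ 3 U x‖ ≤ Lt

/-- The standard Gaussian measure on `ℝ^d`. -/
def stdGaussian (d : ℕ) : Measure (Euc d) :=
  (Measure.pi fun _ : Fin d => ProbabilityTheory.gaussianReal 0 1).map
    ⇑(EuclideanSpace.equiv (Fin d) ℝ).symm

/-- Bernoulli(p) distribution on `ℝ`, giving mass `p` to `1` and `1-p` to `0`. -/
def bern (p : ℝ≥0∞) : Measure ℝ :=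
  p • Measure.dirac (1 : ℝ) + (1 - p) • Measure.dirac (0 : ℝ)

/-- The `i`-th PRLMC midpoint. -/
def prlmcMid {d : ℕ} (U : Euc d → ℝ) (η : ℝ) (K : ℕ) (x : Euc d)
    (g : Fin K → Euc d) (i : Fin K) : Euc d :=
  x - (((i : ℝ) * η / (K : ℝ)) • gradient U x) + Real.sqrt (2 * (i : ℝ) * η / (K : ℝ)) • g i

/-- One step of the PRLMC scheme with step size `η`, Bernoulli variables `h`,
midpoint Gaussians `g` and driving Gaussian `z`. -/
def prlmcStep {d : ℕ} (U : Euc d → ℝ) (η : ℝ) (K : ℕ) (x : Euc d)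
    (h : Fin K → ℝ) (g : Fin K → Euc d) (z : Euc d) : Euc d :=
  x - η • gradient U x
    + η • ∑ i : Fin K, h i • (gradient U x - gradient U (prlmcMid U η K x g i))
    + Real.sqrt (2 * η) • z

/-- The law of the randomness used at a single step of the PRLMC scheme:
`K` i.i.d. Bernoulli(1/K) variables, `K` i.i.d. standard Gaussians for the midpoints
and one standard Gaussian. -/
def prlmcNoise (d K : ℕ) : Measure ((Fin K → ℝ) × (Fin K → Euc d) × Euc d) :=
  (Measure.pi fun _ : Fin K => bern (K : ℝ≥0∞)⁻¹).prod
    ((Measure.pi fun _ : Fin K => stdGaussian d).prod (stdGaussian d))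

/-- The one-step transition kernel `Q_η` of the PRLMC chain. -/
def prlmcKernel {d : ℕ} (U : Euc d → ℝ) (η : ℝ) (K : ℕ) (x : Euc d) : Measure (Euc d) :=
  (prlmcNoise d K).map fun r => prlmcStep U η K x r.1 r.2.1 r.2.2

/-- The law of the PRLMC chain after `n` steps, started from the distribution `μ`. -/
def prlmcIter {d : ℕ} (U : Euc d → ℝ) (η : ℝ) (K : ℕ) (μ : Measure (Euc d)) :
    ℕ → Measure (Euc d)
  | 0 => μ
  | n + 1 => (prlmcIter U η K μ n).bind (prlmcKernel U η K)

/-- The law of the decreasing-step PRLMC chain after `n` steps (the `(k+1)`-th step uses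
step size `γ (k+1)`), started from the distribution `μ`. -/
def prlmcIterVar {d : ℕ} (U : Euc d → ℝ) (K : ℕ) (γ : ℕ → ℝ) (μ : Measure (Euc d)) :
    ℕ → Measure (Euc d)
  | 0 => μ
  | n + 1 => (prlmcIterVar U K γ μ n).bind (prlmcKernel U (γ (n + 1)) K)

/-- Total variation distance. -/
def dTV {d : ℕ} (μ ν : Measure (Euc d)) : ℝ≥0∞ :=
  ⨆ (A : Set (Euc d)) (_ : MeasurableSet A), max (μ A - ν A) (ν A - μ A)

/-- 2-Wasserstein distance. -/
def W2 {d : ℕ} (μ ν : Measure (Euc d)) : ℝ≥0∞ :=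
  ⨅ (π : Measure (Euc d × Euc d)) (_ : π.map Prod.fst = μ ∧ π.map Prod.snd = ν),
    (∫⁻ p, ((‖p.1 - p.2‖₊ : ℝ≥0∞)) ^ 2 ∂π) ^ (1 / 2 : ℝ)

/-- The Gibbs measure `π(dx) ∝ exp(-U(x)) dx`. -/
def gibbs {d : ℕ} (U : Euc d → ℝ) : Measure (Euc d) :=
  (∫⁻ x, ENNReal.ofReal (Real.exp (-U x)) ∂(volume : Measure (Euc d)))⁻¹ •
    (volume : Measure (Euc d)).withDensity fun x => ENNReal.ofReal (Real.exp (-U x))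

/-- Membership in the functional class `𝒢`: `C²` functions with bounded gradient and
bounded Hessian. -/
def MemG {d : ℕ} (h : Euc d → ℝ) : Prop :=
  ContDiff ℝ 2 h ∧ (∃ M, ∀ x, ‖gradient h x‖ ≤ M) ∧
    (∃ M, ∀ x, ‖iteratedFDeriv ℝ 2 h x‖ ≤ M)

/-- The distance `d_𝒢`. -/
def dG {d : ℕ} (μ ν : Measure (Euc d)) : ℝ :=
  sSup { r : ℝ | ∃ h : Euc d → ℝ, MemG h ∧ r = (∫ x, h x ∂μ) - ∫ x, h x ∂ν }

/-- `B` is a standard `d`-dimensional Brownian motion on `(Ω, P)`. -/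
def IsBrownianMotion {Ω : Type} [MeasurableSpace Ω] {d : ℕ} (P : Measure Ω)
    (B : ℝ → Ω → Euc d) : Prop :=
  (∀ t, Measurable (B t)) ∧
  (∀ᵐ ω ∂P, B 0 ω = 0 ∧ Continuous fun t => B t ω) ∧
  (∀ s t : ℝ, 0 ≤ s → s ≤ t →
    Measure.map (fun ω => B t ω - B s ω) P
      = Measure.map (fun z => Real.sqrt (t - s) • z) (stdGaussian d)) ∧
  (∀ τ : ℕ → ℝ, Monotone τ → 0 ≤ τ 0 →
    iIndepFun (fun i ω => B (τ (i + 1)) ω - B (τ i) ω) P)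

/-- `X` is a solution of the Langevin SDE `dX_t = -∇U(X_t) dt + √2 dB_t` started at `x`. -/
def SolvesLangevin {Ω : Type} [MeasurableSpace Ω] {d : ℕ} (U : Euc d → ℝ) (P : Measure Ω)
    (B X : ℝ → Ω → Euc d) (x : Euc d) : Prop :=
  (∀ t, Measurable (X t)) ∧
  ∀ᵐ ω ∂P, (Continuous fun t => X t ω) ∧ ∀ t, 0 ≤ t →
    X t ω = x - (∫ s in (0:ℝ)..t, gradient U (X s ω)) + Real.sqrt 2 • B t ω

/-- `κ = 2mL/(m+L)`. -/
def kap (m L : ℝ) : ℝ := 2 * m * L / (m + L)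

/-- Cumulative times `t_n = γ_1 + ⋯ + γ_n`. -/
def tseq (γ : ℕ → ℝ) (n : ℕ) : ℝ := ∑ k ∈ Finset.Icc 1 n, γ k

/-!
Run two copies of the chain from `x` and `y` with the same noise. Given the Bernoulli variables and
the midpoint Gaussians, strong monotonicity and the Lipschitz bound control the squared distance
after one step by a quadratic polynomial in the number `H` of random midpoints used. Since `H` has
mean one and variance at most one, for `η` small compared with `m / L ^ 2` the mean squared distance
contracts by the factor `1 - η * m`, so one step multiplies the Lipschitz constant of a test
function by at most `√(1 - η * m)`. The driving Gaussian makes a single step strong Feller: by the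
Cameron–Martin formula and a χ² bound, it turns indicators into Lipschitz functions. Hence all
`n`-step probabilities of a measurable set are Lipschitz with geometrically decaying constants, the
laws of the chain are Cauchy in total variation, and their limit is invariant and attracts
every start.
-/

section UniformSetwiseLimit

variable {Ω : Type*} [MeasurableSpace Ω]

theorem hasSum_measureReal_iUnion {μ : Measure Ω} [IsFiniteMeasure μ] {f : ℕ → Set Ω}
    (hf : ∀ i, MeasurableSet (f i)) (hd : Pairwise (Function.onFun Disjoint f)) :
    HasSum (fun i => μ.real (f i)) (μ.real (⋃ i, f i)) := by
  have hsum : ∑' i, μ (f i) = μ (⋃ i, f i) := (measure_iUnion hd hf).symm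
  simpa only [measureReal_def, ← hsum, ENNReal.tsum_toReal_eq fun i => measure_ne_top μ (f i)]
    using ENNReal.hasSum_toReal (hsum ▸ measure_ne_top μ _)

variable {ι : Type*} {p : Filter ι} [p.NeBot] {μ : ι → Measure Ω} [∀ n, IsProbabilityMeasure (μ n)]
  {l : Set Ω → ℝ}

theorem hasSum_iUnion_of_tendstoUniformlyOn_measureReal
    (h : TendstoUniformlyOn (fun n A => (μ n).real A) l p {A | MeasurableSet A})
    {f : ℕ → Set Ω} (hf : ∀ i, MeasurableSet (f i)) (hd : Pairwise (Function.onFun Disjoint f)) :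
    HasSum (fun i => l (f i)) (l (⋃ i, f i)) := by
  have hl : ∀ A, MeasurableSet A → Tendsto (fun n => (μ n).real A) p (𝓝 (l A)) :=
    fun A hA => h.tendsto_at hA
  have hU : ∀ N, MeasurableSet (⋃ i ∈ Finset.range N, f i) :=
    fun N => Finset.measurableSet_biUnion _ fun i _ => hf i
  have hμ : ∀ n N,
      (μ n).real (⋃ i ∈ Finset.range N, f i) = ∑ i ∈ Finset.range N, (μ n).real (f i) :=
    fun n N => measureReal_biUnion_finset (fun i _ j _ hij => hd hij) fun i _ => hf i
  have hfin : ∀ N, l (⋃ i ∈ Finset.range N, f i) = ∑ i ∈ Finset.range N, l (f i) := by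
    refine fun N => tendsto_nhds_unique (hl _ (hU N)) ?_
    simpa only [hμ] using tendsto_finsetSum _ fun i _ => hl (f i) (hf i)
  have hpartial : TendstoUniformly (fun n N => (μ n).real (⋃ i ∈ Finset.range N, f i))
      (fun N => l (⋃ i ∈ Finset.range N, f i)) p := by
    rw [← tendstoUniformlyOn_univ]
    exact (h.comp fun N => ⋃ i ∈ Finset.range N, f i).mono fun N _ => hU N
  have hl₀ : ∀ i, 0 ≤ l (f i) := fun i => ge_of_tendsto' (hl _ (hf i)) fun n => measureReal_nonneg
  rw [hasSum_iff_tendsto_nat_of_nonneg hl₀]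
  simp only [← hfin]
  refine hpartial.tendsto_of_eventually_tendsto (.of_forall fun n => ?_) (hl _ (.iUnion hf))
  simpa only [hμ] using (hasSum_measureReal_iUnion hf hd).tendsto_sum_nat

theorem exists_isProbabilityMeasure_of_tendstoUniformlyOn_measureReal
    (h : TendstoUniformlyOn (fun n A => (μ n).real A) l p {A | MeasurableSet A}) :
    ∃ π : Measure Ω, IsProbabilityMeasure π ∧ ∀ A, MeasurableSet A → π.real A = l A := by
  have hl : ∀ A, MeasurableSet A → Tendsto (fun n => (μ n).real A) p (𝓝 (l A)) :=
    fun A hA => h.tendsto_at hA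
  have hl₀ : ∀ A, MeasurableSet A → 0 ≤ l A :=
    fun A hA => ge_of_tendsto' (hl A hA) fun n => measureReal_nonneg
  have hempty : l ∅ = 0 := tendsto_nhds_unique (hl ∅ .empty) (by simp)
  have huniv : l Set.univ = 1 := tendsto_nhds_unique (hl _ .univ) (by simp)
  let π : Measure Ω := Measure.ofMeasurable (fun A _ => ENNReal.ofReal (l A)) (by simp [hempty])
    fun f hf hd => by
      have hsum := hasSum_iUnion_of_tendstoUniformlyOn_measureReal h hf hd
      rw [← hsum.tsum_eq, ENNReal.ofReal_tsum_of_nonneg (fun i => hl₀ _ (hf i)) hsum.summable]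
  have hπ : ∀ A, MeasurableSet A → π A = ENNReal.ofReal (l A) :=
    fun A hA => Measure.ofMeasurable_apply A hA
  refine ⟨π, ⟨by rw [hπ _ .univ, huniv, ENNReal.ofReal_one]⟩, fun A hA => ?_⟩
  rw [measureReal_def, hπ A hA, ENNReal.toReal_ofReal (hl₀ A hA)]

theorem exists_isProbabilityMeasure_dist_measureReal_le_of_le_geometric {μ : ℕ → Measure Ω}
    [∀ n, IsProbabilityMeasure (μ n)] {C r : ℝ} (hr₀ : 0 ≤ r) (hr : r < 1)
    (h : ∀ A, MeasurableSet A → ∀ n, dist ((μ n).real A) ((μ (n + 1)).real A) ≤ C * r ^ n) :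
    ∃ π : Measure Ω, IsProbabilityMeasure π ∧
      ∀ A, MeasurableSet A → ∀ n, dist ((μ n).real A) (π.real A) ≤ C * r ^ n / (1 - r) := by
  have hlim : ∀ A, ∃ l, MeasurableSet A → Tendsto (fun n => (μ n).real A) atTop (𝓝 l) := by
    intro A
    by_cases hA : MeasurableSet A
    · obtain ⟨l, hl⟩ := cauchySeq_tendsto_of_complete (cauchySeq_of_le_geometric r C hr (h A hA))
      exact ⟨l, fun _ => hl⟩
    · exact ⟨0, fun hA' => absurd hA' hA⟩
  choose l hl using hlim
  have hdist : ∀ A, MeasurableSet A → ∀ n, dist ((μ n).real A) (l A) ≤ C * r ^ n / (1 - r) :=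
    fun A hA => dist_le_of_le_geometric_of_tendsto r C hr (h A hA) (hl A hA)
  have hzero : Tendsto (fun n : ℕ => C * r ^ n / (1 - r)) atTop (𝓝 0) := by
    simpa using ((tendsto_pow_atTop_nhds_zero_of_lt_one hr₀ hr).const_mul C).div_const (1 - r)
  have hunif : TendstoUniformlyOn (fun n A => (μ n).real A) l atTop {A | MeasurableSet A} := by
    refine Metric.tendstoUniformlyOn_iff.2 fun ε hε => ?_
    filter_upwards [hzero.eventually_lt_const hε] with n hn A hA
    rw [dist_comm]
    exact (hdist A hA n).trans_lt hn
  obtain ⟨π, hπ, hπl⟩ := exists_isProbabilityMeasure_of_tendstoUniformlyOn_measureReal hunif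
  exact ⟨π, hπ, fun A hA n => hπl A hA ▸ hdist A hA n⟩

end UniformSetwiseLimit

section MarkovKernel

variable {E : Type*} [MeasurableSpace E]

theorem norm_measureReal_le_one (μ : Measure E) [IsProbabilityMeasure μ] (A : Set E) :
    ‖μ.real A‖ ≤ 1 := by
  rw [Real.norm_of_nonneg measureReal_nonneg]
  exact measureReal_le_one

instance isMarkovKernel_pow (κ : Kernel E E) [IsMarkovKernel κ] (n : ℕ) :
    IsMarkovKernel (κ ^ n) := by
  induction n with
  | zero => exact inferInstanceAs (IsMarkovKernel Kernel.id)
  | succ n ih => exact inferInstanceAs (IsMarkovKernel (Kernel.comp (κ ^ n) κ))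

/-- Geometric convergence, at rate `r`, of the laws of the chain with transition kernel `κ` to `π`
in total variation, from every starting point. -/
def IsGeometricallyErgodic (κ : Kernel E E) (π : Measure E) (r : ℝ) : Prop :=
  ∀ x, ∃ B, ∀ n, ∀ A, MeasurableSet A → dist (((κ ^ n) x).real A) (π.real A) ≤ B * r ^ n

variable {κ : Kernel E E} {π : Measure E} {r : ℝ}

theorem IsGeometricallyErgodic.tendsto_measureReal (h : IsGeometricallyErgodic κ π r)
    (hr₀ : 0 ≤ r) (hr : r < 1) (x : E) {A : Set E} (hA : MeasurableSet A) :
    Tendsto (fun n => ((κ ^ n) x).real A) atTop (𝓝 (π.real A)) := by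
  obtain ⟨B, hB⟩ := h x
  refine tendsto_iff_dist_tendsto_zero.2 (squeeze_zero (fun _ => dist_nonneg) (hB · A hA) ?_)
  simpa using (tendsto_pow_atTop_nhds_zero_of_lt_one hr₀ hr).const_mul B

variable [IsMarkovKernel κ]

theorem measureReal_bind (μ : Measure E) {A : Set E} (hA : MeasurableSet A) :
    (μ.bind κ).real A = ∫ y, (κ y).real A ∂μ := by
  simp only [measureReal_def, Measure.bind_apply hA κ.aemeasurable]
  exact (integral_toReal (Kernel.measurable_coe _ hA).aemeasurable
    (.of_forall fun y => measure_lt_top _ _)).symm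

theorem pow_succ_real_apply (n : ℕ) (x : E) {A : Set E} (hA : MeasurableSet A) :
    ((κ ^ (n + 1)) x).real A = ∫ y, ((κ ^ n) y).real A ∂κ x := by
  rw [← measureReal_bind _ hA, pow_succ]
  rfl

theorem pow_succ_real_apply' (n : ℕ) (x : E) {A : Set E} (hA : MeasurableSet A) :
    ((κ ^ (n + 1)) x).real A = ∫ y, (κ y).real A ∂(κ ^ n) x := by
  rw [← measureReal_bind _ hA, pow_succ']
  rfl

theorem integrable_real_apply (μ : Measure E) [IsFiniteMeasure μ] {A : Set E}
    (hA : MeasurableSet A) : Integrable (fun y => (κ y).real A) μ :=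
  .of_bound (Kernel.measurable_coe κ hA).ennreal_toReal.aestronglyMeasurable 1
    (.of_forall fun _ => norm_measureReal_le_one _ A)

theorem IsGeometricallyErgodic.eq_of_invariant [IsProbabilityMeasure π]
    (h : IsGeometricallyErgodic κ π r)
    (hr₀ : 0 ≤ r) (hr : r < 1) {μ : Measure E} [IsProbabilityMeasure μ]
    (hμ : Kernel.Invariant κ μ) : μ = π := by
  have hpow : ∀ n, Kernel.Invariant (κ ^ n) μ := by
    intro n
    induction n with
    | zero => exact Measure.bind_dirac
    | succ n ih => exact ih.comp hμ
  ext A hA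
  have hlim : Tendsto (fun n => ∫ y, ((κ ^ n) y).real A ∂μ) atTop (𝓝 (∫ _, π.real A ∂μ)) :=
    tendsto_integral_of_dominated_convergence (fun _ => 1)
      (fun n => (integrable_real_apply μ hA).aestronglyMeasurable) (integrable_const _)
      (fun n => .of_forall fun _ => norm_measureReal_le_one _ A)
      (.of_forall fun y => h.tendsto_measureReal hr₀ hr y hA)
  simp only [← measureReal_bind _ hA, (hpow _).def, integral_const, probReal_univ, one_smul]
    at hlim
  rw [← ofReal_measureReal (μ := μ), ← ofReal_measureReal (μ := π),
    tendsto_nhds_unique tendsto_const_nhds hlim]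

end MarkovKernel

section Contraction

variable {E : Type*} [PseudoMetricSpace E] [MeasurableSpace E]

/-- The Markov kernel `κ` contracts the Lipschitz constants of test functions by the factor `ρ`;
only `[0, 1]`-valued test functions are considered, so that no integrability is needed. -/
def ContractsLipschitz (κ : Kernel E E) (ρ : ℝ≥0) : Prop :=
  ∀ ⦃c : ℝ≥0⦄ ⦃f : E → ℝ⦄, LipschitzWith c f → (∀ x, f x ∈ Set.Icc 0 1) →
    LipschitzWith (ρ * c) fun x => ∫ y, f y ∂κ x

/-- The uniform strong Feller property of the kernel `κ`: in one step, indicators of measurable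
sets become `C`-Lipschitz functions. -/
def SmoothsIndicators (κ : Kernel E E) (C : ℝ≥0) : Prop :=
  ∀ ⦃A : Set E⦄, MeasurableSet A → LipschitzWith C fun x => (κ x).real A

variable {κ : Kernel E E} [IsMarkovKernel κ] {ρ C : ℝ≥0}

theorem ContractsLipschitz.lipschitzWith_pow_real (hκ : ContractsLipschitz κ ρ)
    (hs : SmoothsIndicators κ C) (n : ℕ) {A : Set E} (hA : MeasurableSet A) :
    LipschitzWith (ρ ^ n * C) fun x => ((κ ^ (n + 1)) x).real A := by
  induction n with
  | zero => simpa using hs hA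
  | succ n ih =>
    have hstep := hκ ih fun x => ⟨measureReal_nonneg, measureReal_le_one⟩
    simpa only [pow_succ_real_apply (n + 1) _ hA, pow_succ' ρ n, mul_assoc] using hstep

theorem ContractsLipschitz.dist_pow_succ_le (hκ : ContractsLipschitz κ ρ)
    (hs : SmoothsIndicators κ C) {x₀ : E} (hx₀ : Integrable (fun y => dist y x₀) (κ x₀))
    {A : Set E} (hA : MeasurableSet A) (n : ℕ) :
    dist (((κ ^ (n + 1)) x₀).real A) (((κ ^ (n + 2)) x₀).real A)
      ≤ C * (∫ y, dist y x₀ ∂κ x₀) * ρ ^ n := by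
  have hint := integrable_real_apply (κ := κ ^ (n + 1)) (κ x₀) hA
  calc dist (((κ ^ (n + 1)) x₀).real A) (((κ ^ (n + 2)) x₀).real A)
      = ‖∫ y, (((κ ^ (n + 1)) y).real A - ((κ ^ (n + 1)) x₀).real A) ∂κ x₀‖ := by
        rw [integral_sub hint (integrable_const _), dist_comm, dist_eq_norm,
          pow_succ_real_apply (n + 1) x₀ hA]
        simp
    _ ≤ ∫ y, (ρ ^ n * C : ℝ≥0) * dist y x₀ ∂κ x₀ :=
        norm_integral_le_of_norm_le (hx₀.const_mul _) (.of_forall fun y =>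
          (hκ.lipschitzWith_pow_real hs n hA).dist_le_mul y x₀)
    _ = C * (∫ y, dist y x₀ ∂κ x₀) * ρ ^ n := by
        rw [integral_const_mul]
        push_cast
        ring

theorem ContractsLipschitz.exists_isGeometricallyErgodic (hκ : ContractsLipschitz κ ρ)
    (hρ₀ : 0 < ρ) (hρ : ρ < 1) (hs : SmoothsIndicators κ C) {x₀ : E}
    (hx₀ : Integrable (fun y => dist y x₀) (κ x₀)) :
    ∃ π : Measure E, IsProbabilityMeasure π ∧ IsGeometricallyErgodic κ π ρ := by
  obtain ⟨π, hπ, hconv⟩ := exists_isProbabilityMeasure_dist_measureReal_le_of_le_geometric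
    (μ := fun n => (κ ^ (n + 1)) x₀) ρ.2 (NNReal.coe_lt_one.2 hρ)
    fun A hA => hκ.dist_pow_succ_le hs hx₀ hA
  set D := C * ∫ y, dist y x₀ ∂κ x₀
  refine ⟨π, hπ, fun x => ⟨1 + (C * dist x x₀ + D / (1 - ρ)) / ρ, fun n A hA => ?_⟩⟩
  have hρ' : (0 : ℝ) < ρ := hρ₀
  have hgap : (0 : ℝ) < 1 - ρ := sub_pos.2 (NNReal.coe_lt_one.2 hρ)
  have hD : 0 ≤ D := mul_nonneg C.2 (integral_nonneg fun y => dist_nonneg)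
  have hB : 0 ≤ (C * dist x x₀ + D / (1 - ρ)) / ρ :=
    div_nonneg (add_nonneg (mul_nonneg C.2 dist_nonneg) (div_nonneg hD hgap.le)) ρ.2
  cases n with
  | zero =>
    have hle := Real.dist_le_of_mem_Icc_01 (x := ((κ ^ 0) x).real A) (y := π.real A)
      ⟨measureReal_nonneg, measureReal_le_one⟩ ⟨measureReal_nonneg, measureReal_le_one⟩
    rw [pow_zero (ρ : ℝ), mul_one]
    linarith
  | succ n =>
    calc dist (((κ ^ (n + 1)) x).real A) (π.real A)
        ≤ (ρ ^ n * C : ℝ≥0) * dist x x₀ + D * ρ ^ n / (1 - ρ) :=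
          (dist_triangle _ _ _).trans
            (add_le_add ((hκ.lipschitzWith_pow_real hs n hA).dist_le_mul x x₀) (hconv A hA n))
      _ = (C * dist x x₀ + D / (1 - ρ)) / ρ * ρ ^ (n + 1) := by
          push_cast
          rw [pow_succ]
          field_simp [hρ'.ne']
      _ ≤ (1 + (C * dist x x₀ + D / (1 - ρ)) / ρ) * ρ ^ (n + 1) := by
          gcongr
          linarith

variable [BorelSpace E] {π : Measure E} [IsProbabilityMeasure π]

theorem tendsto_integral_of_tendsto_measureReal {μ : ℕ → Measure E}
    [∀ n, IsProbabilityMeasure (μ n)]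
    (h : ∀ A, MeasurableSet A → Tendsto (fun n => (μ n).real A) atTop (𝓝 (π.real A)))
    {f : E → ℝ} (hf : Continuous f) {M : ℝ} (hM : ∀ x, ‖f x‖ ≤ M) :
    Tendsto (fun n => ∫ x, f x ∂μ n) atTop (𝓝 (∫ x, f x ∂π)) := by
  have hopen : ∀ G, IsOpen G → π G ≤ liminf (fun n => μ n G) atTop := by
    intro G hG
    have hlim := (ENNReal.tendsto_toReal_iff (fun n => measure_ne_top (μ n) G)
      (measure_ne_top π G)).1 (h G hG.measurableSet)
    exact hlim.liminf_eq.ge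
  have hweak := tendsto_of_forall_isOpen_le_liminf_nat' (μ := ⟨π, inferInstance⟩)
    (μs := fun n => ⟨μ n, inferInstance⟩) hopen
  exact ProbabilityMeasure.tendsto_iff_forall_integral_tendsto.1 hweak
    (BoundedContinuousFunction.ofNormedAddCommGroup f hf M hM)

theorem IsGeometricallyErgodic.invariant [Nonempty E] {r : ℝ} (h : IsGeometricallyErgodic κ π r)
    (hr₀ : 0 ≤ r) (hr : r < 1) (hs : SmoothsIndicators κ C) : Kernel.Invariant κ π := by
  obtain ⟨x⟩ := ‹Nonempty E›
  refine Measure.ext fun A hA => ?_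
  have hlim : Tendsto (fun n => ∫ y, (κ y).real A ∂(κ ^ n) x) atTop (𝓝 (∫ y, (κ y).real A ∂π)) :=
    tendsto_integral_of_tendsto_measureReal (fun B hB => h.tendsto_measureReal hr₀ hr x hB)
      (hs hA).continuous fun y => norm_measureReal_le_one _ A
  have hshift := (tendsto_add_atTop_iff_nat 1).2 (h.tendsto_measureReal hr₀ hr x hA)
  simp only [pow_succ_real_apply' _ x hA] at hshift
  rw [← ofReal_measureReal (μ := π.bind κ), ← ofReal_measureReal (μ := π), measureReal_bind _ hA,
    tendsto_nhds_unique hlim hshift]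

end Contraction

section TotalVariation

variable {d : ℕ}

theorem dTV_le_ofReal {μ ν : Measure (Euc d)} [IsFiniteMeasure μ] [IsFiniteMeasure ν] {c : ℝ}
    (h : ∀ A, MeasurableSet A → dist (μ.real A) (ν.real A) ≤ c) : dTV μ ν ≤ ENNReal.ofReal c := by
  refine iSup₂_le fun A hA => ?_
  obtain ⟨hneg, hpos⟩ := abs_le.1 (h A hA)
  rw [← ofReal_measureReal (μ := μ), ← ofReal_measureReal (μ := ν),
    ← ENNReal.ofReal_sub _ measureReal_nonneg, ← ENNReal.ofReal_sub _ measureReal_nonneg]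
  exact max_le (ENNReal.ofReal_le_ofReal (by linarith)) (ENNReal.ofReal_le_ofReal (by linarith))

theorem IsGeometricallyErgodic.exists_tsum_dTV_lt_top {κ : Kernel (Euc d) (Euc d)}
    [IsMarkovKernel κ] {π : Measure (Euc d)} [IsFiniteMeasure π] {r : ℝ}
    (h : IsGeometricallyErgodic κ π r) (hr₀ : 0 ≤ r) (hr : r < 1) :
    ∃ δ : ℝ, 1 < δ ∧ ∀ x, ∑' n : ℕ, ENNReal.ofReal (δ ^ n) * dTV ((κ ^ n) x) π < ⊤ := by
  have hδ : 1 < 2 / (1 + r) := by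
    rw [one_lt_div (by linarith)]
    linarith
  set δ := 2 / (1 + r) with hδ_def
  have hδr : δ * r < 1 := by
    rw [hδ_def, div_mul_eq_mul_div, div_lt_one (by linarith)]
    linarith
  refine ⟨δ, hδ, fun x => ?_⟩
  obtain ⟨B, hB⟩ := h x
  have hB₀ : 0 ≤ B := by simpa using dist_nonneg.trans (hB 0 ∅ .empty)
  have hterm : ∀ n : ℕ, ENNReal.ofReal (δ ^ n) * dTV ((κ ^ n) x) π
      ≤ ENNReal.ofReal (B * (δ * r) ^ n) := by
    intro n
    calc ENNReal.ofReal (δ ^ n) * dTV ((κ ^ n) x) π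
        ≤ ENNReal.ofReal (δ ^ n) * ENNReal.ofReal (B * r ^ n) := by
          gcongr
          exact dTV_le_ofReal (hB n)
      _ = ENNReal.ofReal (B * (δ * r) ^ n) := by
          rw [← ENNReal.ofReal_mul (by positivity)]
          ring_nf
  have hsum : Summable fun n : ℕ => B * (δ * r) ^ n :=
    (summable_geometric_of_lt_one (by positivity) hδr).mul_left B
  refine (ENNReal.tsum_le_tsum hterm).trans_lt ?_
  rw [← ENNReal.ofReal_tsum_of_nonneg (fun n => by positivity) hsum]
  exact ENNReal.ofReal_lt_top

end TotalVariation

section ChiSquare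

variable {α : Type*} [MeasurableSpace α] {μ : Measure α} {f : α → ℝ}

theorem measureReal_withDensity_ofReal (hf : Measurable f) (hf₀ : ∀ x, 0 ≤ f x) {A : Set α}
    (hA : MeasurableSet A) :
    (μ.withDensity fun x => ENNReal.ofReal (f x)).real A = ∫ x in A, f x ∂μ := by
  rw [measureReal_def, withDensity_apply _ hA,
    integral_eq_lintegral_of_nonneg_ae (.of_forall hf₀) hf.aestronglyMeasurable]

variable [IsProbabilityMeasure μ]

theorem sq_integral_le_integral_sq (hf : MemLp f 2 μ) :
    (∫ x, f x ∂μ) ^ 2 ≤ ∫ x, f x ^ 2 ∂μ := by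
  have hvar := variance_nonneg f μ
  rw [variance_eq_sub hf] at hvar
  exact sub_nonneg.1 hvar

theorem dist_measureReal_withDensity_le (hf : Measurable f) (hf₀ : ∀ x, 0 ≤ f x)
    (hf₂ : MemLp f 2 μ) (hf₁ : ∫ x, f x ∂μ = 1) {A : Set α} (hA : MeasurableSet A) :
    dist ((μ.withDensity fun x => ENNReal.ofReal (f x)).real A) (μ.real A)
      ≤ √(∫ x, f x ^ 2 ∂μ - 1) := by
  have hint : Integrable f μ := hf₂.integrable one_le_two
  have hsub : Integrable (fun x => f x - 1) μ := hint.sub (integrable_const 1)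
  have hchi : (∫ x, |f x - 1| ∂μ) ^ 2 ≤ ∫ x, f x ^ 2 ∂μ - 1 := by
    calc (∫ x, |f x - 1| ∂μ) ^ 2
        ≤ ∫ x, |f x - 1| ^ 2 ∂μ := sq_integral_le_integral_sq (hf₂.sub (memLp_const 1)).abs
      _ = Var[f; μ] := by simp only [sq_abs, variance_eq_integral hf.aemeasurable, hf₁]
      _ = ∫ x, f x ^ 2 ∂μ - 1 := by simp [variance_eq_sub hf₂, hf₁]
  calc dist ((μ.withDensity fun x => ENNReal.ofReal (f x)).real A) (μ.real A)
      = |∫ x in A, (f x - 1) ∂μ| := by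
        rw [integral_sub hint.integrableOn (integrable_const 1).integrableOn, Real.dist_eq,
          measureReal_withDensity_ofReal hf hf₀ hA]
        simp
    _ ≤ ∫ x in A, |f x - 1| ∂μ := abs_integral_le_integral_abs
    _ ≤ ∫ x, |f x - 1| ∂μ := setIntegral_le_integral hsub.abs (.of_forall fun _ => abs_nonneg _)
    _ ≤ √(∫ x, f x ^ 2 ∂μ - 1) := Real.le_sqrt_of_sq_le hchi

end ChiSquare

section GaussianShift

theorem pi_withDensity {ι : Type*} [Fintype ι] {α : ι → Type*} [∀ i, MeasurableSpace (α i)]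
    (μ : ∀ i, Measure (α i)) [∀ i, IsProbabilityMeasure (μ i)] {f : ∀ i, α i → ℝ≥0∞}
    [∀ i, SigmaFinite ((μ i).withDensity (f i))] (hf : ∀ i, Measurable (f i)) :
    Measure.pi (fun i => (μ i).withDensity (f i))
      = (Measure.pi μ).withDensity fun x => ∏ i, f i (x i) := by
  classical
  refine Measure.pi_eq fun s hs => ?_
  have hindicator : ∀ x : ∀ i, α i, (Set.univ.pi s).indicator (fun x => ∏ i, f i (x i)) x
      = ∏ i, (s i).indicator (f i) (x i) := by
    intro x
    by_cases hx : x ∈ Set.univ.pi s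
    · rw [Set.indicator_of_mem hx]
      exact Finset.prod_congr rfl fun i _ => (Set.indicator_of_mem (hx i trivial) _).symm
    · obtain ⟨i, hi⟩ : ∃ i, x i ∉ s i := by simpa [Set.mem_univ_pi] using hx
      rw [Set.indicator_of_notMem hx,
        Finset.prod_eq_zero (Finset.mem_univ i) (Set.indicator_of_notMem hi _)]
  have hmeas : ∀ i, Measurable ((s i).indicator (f i)) := fun i => (hf i).indicator (hs i)
  have hindep := iIndepFun_pi (μ := μ) fun i => (hmeas i).aemeasurable
  rw [withDensity_apply _ (.univ_pi hs), ← lintegral_indicator (.univ_pi hs)]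
  simp only [hindicator]
  rw [lintegral_prod_eq_prod_lintegral_of_indepFun Finset.univ _ hindep
    fun i => (hmeas i).comp (measurable_pi_apply i)]
  refine Finset.prod_congr rfl fun i _ => ?_
  rw [(measurePreserving_eval μ i).lintegral_comp (hmeas i), lintegral_indicator (hs i),
    withDensity_apply _ (hs i)]

theorem gaussianReal_eq_withDensity (a : ℝ) :
    gaussianReal a 1 = (gaussianReal 0 1).withDensity
      fun t => ENNReal.ofReal (Real.exp (a * t - a ^ 2 / 2)) := by
  rw [gaussianReal_of_var_ne_zero _ one_ne_zero, gaussianReal_of_var_ne_zero _ one_ne_zero,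
    ← withDensity_mul _ (measurable_gaussianPDF 0 1) (by fun_prop)]
  congr with t
  rw [Pi.mul_apply, gaussianPDF, gaussianPDF, ← ENNReal.ofReal_mul (gaussianPDFReal_nonneg _ _ _)]
  simp only [gaussianPDFReal, NNReal.coe_one, mul_assoc, ← Real.exp_add]
  congr 3
  ring

variable {ι : Type*} [Fintype ι]

/-- The density (Cameron–Martin) of the standard Gaussian measure on `ι → ℝ` shifted by `w` with
respect to the unshifted one. -/
def gaussianShiftDensity (w x : ι → ℝ) : ℝ := Real.exp (∑ i, (w i * x i - w i ^ 2 / 2))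

theorem gaussianShiftDensity_nonneg (w x : ι → ℝ) : 0 ≤ gaussianShiftDensity w x :=
  (Real.exp_pos _).le

theorem measurable_gaussianShiftDensity (w : ι → ℝ) : Measurable (gaussianShiftDensity w) := by
  unfold gaussianShiftDensity
  fun_prop

theorem gaussianShiftDensity_sq (w x : ι → ℝ) : gaussianShiftDensity w x ^ 2
    = Real.exp (∑ i, w i ^ 2) * gaussianShiftDensity (2 • w) x := by
  simp only [gaussianShiftDensity, ← Real.exp_nat_mul, ← Real.exp_add, Finset.mul_sum,
    ← Finset.sum_add_distrib, Pi.smul_apply, nsmul_eq_mul]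
  congr! 2
  push_cast
  ring

variable (w : ι → ℝ)

local notation "γ" => Measure.pi fun _ : ι => gaussianReal 0 1

theorem map_add_pi_gaussianReal :
    (γ).map (· + w) = (γ).withDensity fun x => ENNReal.ofReal (gaussianShiftDensity w x) := by
  have hpi : (γ).map (· + w) = Measure.pi fun i => gaussianReal (w i) 1 := by
    have hmap := Measure.pi_map_pi (μ := fun _ : ι => gaussianReal 0 1)
      (f := fun i t => t + w i) fun i => by fun_prop
    simp_rw [gaussianReal_map_add_const, zero_add] at hmap
    exact hmap
  have (i : ι) : SigmaFinite ((gaussianReal 0 1).withDensity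
      fun t => ENNReal.ofReal (Real.exp (w i * t - w i ^ 2 / 2))) := by
    rw [← gaussianReal_eq_withDensity]
    infer_instance
  simp only [hpi, gaussianReal_eq_withDensity (w _)]
  rw [pi_withDensity _ fun i => by fun_prop]
  simp only [gaussianShiftDensity, Real.exp_sum,
    ENNReal.ofReal_prod_of_nonneg fun _ _ => (Real.exp_pos _).le]

theorem lintegral_gaussianShiftDensity :
    ∫⁻ x, ENNReal.ofReal (gaussianShiftDensity w x) ∂γ = 1 := by
  have : IsProbabilityMeasure ((γ).map (· + w)) := Measure.isProbabilityMeasure_map (by fun_prop)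
  rw [← setLIntegral_univ, ← withDensity_apply _ .univ, ← map_add_pi_gaussianReal, measure_univ]

theorem integrable_gaussianShiftDensity : Integrable (gaussianShiftDensity w) γ := by
  refine ⟨(measurable_gaussianShiftDensity w).aestronglyMeasurable, ?_⟩
  rw [hasFiniteIntegral_iff_ofReal (.of_forall (gaussianShiftDensity_nonneg w)),
    lintegral_gaussianShiftDensity]
  exact ENNReal.one_lt_top

theorem integral_gaussianShiftDensity : ∫ x, gaussianShiftDensity w x ∂γ = 1 := by
  rw [integral_eq_lintegral_of_nonneg_ae (.of_forall (gaussianShiftDensity_nonneg w))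
    (measurable_gaussianShiftDensity w).aestronglyMeasurable, lintegral_gaussianShiftDensity,
    ENNReal.toReal_one]

theorem memLp_two_gaussianShiftDensity : MemLp (gaussianShiftDensity w) 2 γ := by
  rw [memLp_two_iff_integrable_sq (measurable_gaussianShiftDensity w).aestronglyMeasurable]
  simp only [gaussianShiftDensity_sq]
  exact (integrable_gaussianShiftDensity _).const_mul _

theorem integral_gaussianShiftDensity_sq :
    ∫ x, gaussianShiftDensity w x ^ 2 ∂γ = Real.exp (∑ i, w i ^ 2) := by
  simp only [gaussianShiftDensity_sq, integral_const_mul, integral_gaussianShiftDensity, mul_one]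

theorem dist_map_add_pi_gaussianReal_le {A : Set (ι → ℝ)} (hA : MeasurableSet A) :
    dist (((γ).map (· + w)).real A) ((γ).real A) ≤ 2 * √(∑ i, w i ^ 2) := by
  have : IsProbabilityMeasure ((γ).map (· + w)) := Measure.isProbabilityMeasure_map (by fun_prop)
  set s := ∑ i, w i ^ 2
  have hs₀ : 0 ≤ s := Finset.sum_nonneg fun i _ => sq_nonneg _
  rcases le_total 1 s with hs₁ | hs₁
  · have hle := Real.dist_le_of_mem_Icc_01 (x := ((γ).map (· + w)).real A) (y := (γ).real A)
      ⟨measureReal_nonneg, measureReal_le_one⟩ ⟨measureReal_nonneg, measureReal_le_one⟩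
    linarith [Real.one_le_sqrt.2 hs₁]
  · have hexp : Real.exp s - 1 ≤ 2 * s := by
      have hle := Real.abs_exp_sub_one_le (x := s) (by rwa [abs_of_nonneg hs₀])
      rw [abs_of_nonneg hs₀] at hle
      exact (le_abs_self _).trans hle
    calc dist (((γ).map (· + w)).real A) ((γ).real A)
        ≤ √(∫ x, gaussianShiftDensity w x ^ 2 ∂γ - 1) := by
          rw [map_add_pi_gaussianReal]
          exact dist_measureReal_withDensity_le (measurable_gaussianShiftDensity w)
            (gaussianShiftDensity_nonneg w) (memLp_two_gaussianShiftDensity w)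
            (integral_gaussianShiftDensity w) hA
      _ ≤ √(2 ^ 2 * s) := by
          rw [integral_gaussianShiftDensity_sq]
          exact Real.sqrt_le_sqrt (by linarith)
      _ = 2 * √s := by rw [Real.sqrt_mul (by norm_num), Real.sqrt_sq zero_le_two]

end GaussianShift

section GaussianStep

variable {d : ℕ}

theorem stdGaussian_eq_stdGaussian_euclideanSpace :
    _root_.stdGaussian d = ProbabilityTheory.stdGaussian (Euc d) :=
  map_pi_eq_stdGaussian

instance isGaussian_stdGaussian_euc : IsGaussian (_root_.stdGaussian d) := by
  rw [stdGaussian_eq_stdGaussian_euclideanSpace]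
  infer_instance

theorem dist_stdGaussian_real_le {σ : ℝ} (hσ : 0 < σ) (u v : Euc d) {A : Set (Euc d)}
    (hA : MeasurableSet A) :
    dist ((_root_.stdGaussian d).real {z | u + σ • z ∈ A})
        ((_root_.stdGaussian d).real {z | v + σ • z ∈ A}) ≤ 2 / σ * dist u v := by
  set T := (EuclideanSpace.equiv (Fin d) ℝ).symm with hT
  set w : Fin d → ℝ := fun i => (u i - v i) / σ with hw
  have hpre (u : Euc d) : MeasurableSet {z : Fin d → ℝ | u + σ • T z ∈ A} :=
    hA.preimage (f := fun z => u + σ • T z) (by fun_prop)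
  have hmap (u : Euc d) : (_root_.stdGaussian d).real {z | u + σ • z ∈ A}
      = (Measure.pi fun _ : Fin d => gaussianReal 0 1).real {z | u + σ • T z ∈ A} :=
    map_measureReal_apply T.continuous.measurable
      (hA.preimage (f := fun z : Euc d => u + σ • z) (by fun_prop))
  have hshift : (· + w) ⁻¹' {z : Fin d → ℝ | v + σ • T z ∈ A} = {z | u + σ • T z ∈ A} := by
    ext z
    have heq : v + σ • T (z + w) = u + σ • T z := by
      ext i
      simp only [hT, hw, PiLp.add_apply, PiLp.smul_apply, smul_eq_mul,
        PiLp.continuousLinearEquiv_symm_apply, Pi.add_apply]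
      field_simp
      ring
    exact iff_of_eq (congrArg (· ∈ A) heq)
  have hw_sq : ∑ i, w i ^ 2 = (dist u v / σ) ^ 2 := by
    simp only [hw, div_pow, dist_eq_norm, EuclideanSpace.real_norm_sq_eq, Finset.sum_div,
      PiLp.sub_apply]
  calc dist ((_root_.stdGaussian d).real {z | u + σ • z ∈ A})
        ((_root_.stdGaussian d).real {z | v + σ • z ∈ A})
      = dist (((Measure.pi fun _ : Fin d => gaussianReal 0 1).map (· + w)).real
            {z | v + σ • T z ∈ A})
          ((Measure.pi fun _ : Fin d => gaussianReal 0 1).real {z | v + σ • T z ∈ A}) := by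
        rw [hmap, hmap, map_measureReal_apply (by fun_prop) (hpre v), hshift]
    _ ≤ 2 * √(∑ i, w i ^ 2) := dist_map_add_pi_gaussianReal_le w (hpre v)
    _ = 2 / σ * dist u v := by
        rw [hw_sq, Real.sqrt_sq (by positivity)]
        ring

variable {Ω : Type*} [MeasurableSpace Ω]

/-- The transition kernel of the chain `x ↦ F (x, ω) + σ • z`, where at each step `ω` is drawn from
`P` and `z` is an independent standard Gaussian vector. -/
def gaussianStep (P : Measure Ω) (F : Euc d × Ω → Euc d) (σ : ℝ) : Kernel (Euc d) (Euc d) :=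
  (Kernel.id ×ₖ Kernel.const _ (P.prod (_root_.stdGaussian d))).map
    fun q => F (q.1, q.2.1) + σ • q.2.2

/-- The random map `F · ω`, `ω ∼ P`, is `ρ`-Lipschitz in mean. Integrability is part of the notion,
since otherwise the integral could be the junk value `0`. -/
def LipschitzInMean (P : Measure Ω) (F : Euc d × Ω → Euc d) (ρ : ℝ≥0) : Prop :=
  ∀ x y, Integrable (fun ω => dist (F (x, ω)) (F (y, ω))) P ∧
    ∫ ω, dist (F (x, ω)) (F (y, ω)) ∂P ≤ ρ * dist x y

variable {P : Measure Ω} [IsProbabilityMeasure P] {F : Euc d × Ω → Euc d} {σ : ℝ} {ρ : ℝ≥0}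

theorem gaussianStep_apply (hF : Measurable F) (x : Euc d) :
    gaussianStep P F σ x
      = (P.prod (_root_.stdGaussian d)).map fun q => F (x, q.1) + σ • q.2 := by
  rw [gaussianStep, Kernel.map_apply _ (by fun_prop), Kernel.prod_apply, Kernel.id_apply,
    Kernel.const_apply, Measure.dirac_prod, Measure.map_map (by fun_prop) (by fun_prop)]
  rfl

theorem isMarkovKernel_gaussianStep (hF : Measurable F) :
    IsMarkovKernel (gaussianStep P F σ) :=
  Kernel.IsMarkovKernel.map _ (by fun_prop)

theorem LipschitzInMean.contractsLipschitz (h : LipschitzInMean P F ρ) (hF : Measurable F) :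
    ContractsLipschitz (gaussianStep P F σ) ρ := by
  intro c f hf hf₀₁
  have hintegral (x : Euc d) : ∫ y, f y ∂gaussianStep P F σ x
      = ∫ q, f (F (x, q.1) + σ • q.2) ∂P.prod (_root_.stdGaussian d) := by
    rw [gaussianStep_apply hF, integral_map (by fun_prop) hf.continuous.aestronglyMeasurable]
  have hint (x : Euc d) : Integrable (fun q : Ω × Euc d => f (F (x, q.1) + σ • q.2))
      (P.prod (_root_.stdGaussian d)) := by
    have hmeas : Measurable fun q : Ω × Euc d => f (F (x, q.1) + σ • q.2) :=
      hf.continuous.measurable.comp (by fun_prop)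
    refine .of_bound hmeas.aestronglyMeasurable 1 (.of_forall fun q => ?_)
    rw [Real.norm_of_nonneg (hf₀₁ _).1]
    exact (hf₀₁ _).2
  refine .of_dist_le_mul fun x y => ?_
  obtain ⟨hD, hDle⟩ := h x y
  calc dist (∫ y, f y ∂gaussianStep P F σ x) (∫ z, f z ∂gaussianStep P F σ y)
      = ‖∫ q, (f (F (x, q.1) + σ • q.2) - f (F (y, q.1) + σ • q.2))
          ∂P.prod (_root_.stdGaussian d)‖ := by
        rw [hintegral, hintegral, integral_sub (hint x) (hint y), dist_eq_norm]
    _ ≤ ∫ q, c * dist (F (x, q.1)) (F (y, q.1)) ∂P.prod (_root_.stdGaussian d) := by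
        refine norm_integral_le_of_norm_le ((hD.comp_fst _).const_mul _) (.of_forall fun q => ?_)
        rw [← dist_eq_norm, ← dist_add_right (F (x, q.1)) (F (y, q.1)) (σ • q.2)]
        exact hf.dist_le_mul _ _
    _ = c * ∫ ω, dist (F (x, ω)) (F (y, ω)) ∂P := by
        rw [integral_const_mul, integral_fun_fst (fun ω => dist (F (x, ω)) (F (y, ω))),
          probReal_univ, one_smul]
    _ ≤ (ρ * c : ℝ≥0) * dist x y := by
        rw [NNReal.coe_mul, mul_comm (ρ : ℝ), mul_assoc]
        gcongr

theorem LipschitzInMean.smoothsIndicators (h : LipschitzInMean P F ρ) (hF : Measurable F)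
    (hσ : 0 < σ) : SmoothsIndicators (gaussianStep P F σ) (Real.toNNReal (2 / σ) * ρ) := by
  intro A hA
  have hmeas (x : Euc d) : MeasurableSet ((fun q : Ω × Euc d => F (x, q.1) + σ • q.2) ⁻¹' A) :=
    hA.preimage (by fun_prop)
  have hreal (x : Euc d) : (gaussianStep P F σ x).real A
      = ∫ ω, (_root_.stdGaussian d).real {z | F (x, ω) + σ • z ∈ A} ∂P := by
    rw [gaussianStep_apply hF, map_measureReal_apply (by fun_prop) hA, measureReal_def,
      Measure.prod_apply (hmeas x)]
    exact (integral_toReal (measurable_measure_prodMk_left (hmeas x)).aemeasurable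
      (.of_forall fun _ => measure_lt_top _ _)).symm
  have hint (x : Euc d) :
      Integrable (fun ω => (_root_.stdGaussian d).real {z | F (x, ω) + σ • z ∈ A}) P :=
    .of_bound (measurable_measure_prodMk_left (hmeas x)).ennreal_toReal.aestronglyMeasurable 1
      (.of_forall fun _ => norm_measureReal_le_one _ _)
  refine .of_dist_le_mul fun x y => ?_
  obtain ⟨hD, hDle⟩ := h x y
  calc dist ((gaussianStep P F σ x).real A) ((gaussianStep P F σ y).real A)
      = ‖∫ ω, ((_root_.stdGaussian d).real {z | F (x, ω) + σ • z ∈ A}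
          - (_root_.stdGaussian d).real {z | F (y, ω) + σ • z ∈ A}) ∂P‖ := by
        rw [hreal, hreal, integral_sub (hint x) (hint y), dist_eq_norm]
    _ ≤ ∫ ω, 2 / σ * dist (F (x, ω)) (F (y, ω)) ∂P :=
        norm_integral_le_of_norm_le (hD.const_mul _) (.of_forall fun ω =>
          dist_stdGaussian_real_le hσ _ _ hA)
    _ ≤ (Real.toNNReal (2 / σ) * ρ : ℝ≥0) * dist x y := by
        rw [integral_const_mul, NNReal.coe_mul, Real.coe_toNNReal _ (by positivity), mul_assoc]
        gcongr

theorem integrable_dist_gaussianStep (hF : Measurable F) {x : Euc d}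
    (hx : Integrable (fun ω => F (x, ω)) P) :
    Integrable (fun y => dist y x) (gaussianStep P F σ x) := by
  rw [gaussianStep_apply hF, integrable_map_measure (by fun_prop) (by fun_prop)]
  have hz : Integrable (fun z : Euc d => σ • z) (_root_.stdGaussian d) :=
    IsGaussian.integrable_fun_id.smul σ
  simp only [Function.comp_def, dist_eq_norm]
  exact (((hx.comp_fst _).add (hz.comp_snd _)).sub (integrable_const x)).norm

theorem LipschitzInMean.exists_isGeometricallyErgodic (h : LipschitzInMean P F ρ)
    (hF : Measurable F) (hρ₀ : 0 < ρ) (hρ : ρ < 1) (hσ : 0 < σ) {x₀ : Euc d}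
    (hx₀ : Integrable (fun ω => F (x₀, ω)) P) :
    ∃ π, IsProbabilityMeasure π ∧ IsGeometricallyErgodic (gaussianStep P F σ) π ρ ∧
      Kernel.Invariant (gaussianStep P F σ) π := by
  have := isMarkovKernel_gaussianStep (P := P) (σ := σ) hF
  obtain ⟨π, hπ, herg⟩ := (h.contractsLipschitz hF).exists_isGeometricallyErgodic hρ₀ hρ
    (h.smoothsIndicators hF hσ) (integrable_dist_gaussianStep hF hx₀)
  exact ⟨π, hπ, herg, herg.invariant ρ.2 (NNReal.coe_lt_one.2 hρ) (h.smoothsIndicators hF hσ)⟩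

end GaussianStep

section Bernoulli

variable {p : ℝ≥0∞}

theorem isProbabilityMeasure_bern (hp : p ≤ 1) : IsProbabilityMeasure (bern p) :=
  ⟨by simp [bern, hp]⟩

instance isProbabilityMeasure_bern_inv_natCast (K : ℕ) [NeZero K] :
    IsProbabilityMeasure (bern (K : ℝ≥0∞)⁻¹) :=
  isProbabilityMeasure_bern <| ENNReal.inv_le_one.2 <| Nat.one_le_cast.2 <| NeZero.one_le

theorem ae_bern_mem_Icc (p : ℝ≥0∞) : ∀ᵐ t ∂bern p, t ∈ Set.Icc (0 : ℝ) 1 := by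
  rw [bern, ae_add_measure_iff]
  constructor <;>
    exact Measure.ae_smul_measure ((ae_dirac_iff measurableSet_Icc).2 (by simp)) _

theorem integral_bern (hp : p ≤ 1) (f : ℝ → ℝ) :
    ∫ t, f t ∂bern p = p.toReal * f 1 + (1 - p).toReal * f 0 := by
  have hp' : p ≠ ⊤ := ne_top_of_le_ne_top ENNReal.one_ne_top hp
  have hq' : 1 - p ≠ ⊤ := ne_top_of_le_ne_top ENNReal.one_ne_top tsub_le_self
  have hdirac (a : ℝ) : Integrable f (Measure.dirac a) := integrable_dirac (by simp)
  rw [bern, integral_add_measure ((hdirac 1).smul_measure hp') ((hdirac 0).smul_measure hq')]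
  simp only [integral_smul_measure, integral_dirac, smul_eq_mul]

variable {ι : Type*} [Fintype ι] [IsProbabilityMeasure (bern p)]

theorem ae_pi_bern_mem_Icc :
    ∀ᵐ h ∂Measure.pi fun _ : ι => bern p, ∀ i, h i ∈ Set.Icc (0 : ℝ) 1 :=
  ae_all_iff.2 fun i =>
    (measurePreserving_eval (fun _ : ι => bern p) i).quasiMeasurePreserving.ae (ae_bern_mem_Icc p)

theorem memLp_two_bern : MemLp (fun t => t) 2 (bern p) := by
  refine MemLp.of_bound measurable_id.aestronglyMeasurable 1 ?_
  filter_upwards [ae_bern_mem_Icc p] with t ht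
  rw [Real.norm_of_nonneg ht.1]
  exact ht.2

theorem memLp_two_eval_pi_bern (i : ι) :
    MemLp (fun h => h i) 2 (Measure.pi fun _ : ι => bern p) :=
  memLp_two_bern.comp_measurePreserving (measurePreserving_eval _ i)

theorem memLp_two_sum_pi_bern : MemLp (fun h => ∑ i, h i) 2 (Measure.pi fun _ : ι => bern p) :=
  memLp_finsetSum _ fun i _ => memLp_two_eval_pi_bern i

theorem integral_sum_pi_bern (hp : p ≤ 1) :
    ∫ h, ∑ i, h i ∂Measure.pi (fun _ : ι => bern p) = Fintype.card ι * p.toReal := by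
  have hmean (i : ι) : ∫ h, h i ∂Measure.pi (fun _ : ι => bern p) = p.toReal := by
    rw [integral_comp_eval (μ := fun _ : ι => bern p) (f := fun t : ℝ => t) (by fun_prop),
      integral_bern hp, mul_one, mul_zero, add_zero]
  rw [integral_finsetSum _ fun i _ => (memLp_two_eval_pi_bern i).integrable one_le_two]
  simp only [hmean, Finset.sum_const, Finset.card_univ, nsmul_eq_mul]

theorem integral_sum_sq_pi_bern_le (hp : p ≤ 1) :
    ∫ h, (∑ i, h i) ^ 2 ∂Measure.pi (fun _ : ι => bern p)
      ≤ Fintype.card ι * p.toReal + (Fintype.card ι * p.toReal) ^ 2 := by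
  have hvar_bern : Var[fun t => t; bern p] ≤ p.toReal := by
    refine (variance_le_expectation_sq measurable_id.aestronglyMeasurable).trans_eq ?_
    simp [integral_bern hp]
  have hvar : Var[fun h => ∑ i, h i; Measure.pi fun _ : ι => bern p]
      ≤ Fintype.card ι * p.toReal := by
    have hsum := variance_sum_pi (μ := fun _ : ι => bern p) (X := fun _ t => t)
      fun _ => memLp_two_bern
    rw [Finset.sum_fn] at hsum
    rw [hsum, ← nsmul_eq_mul]
    exact Finset.sum_le_card_nsmul _ _ _ fun _ _ => hvar_bern
  rw [variance_eq_sub memLp_two_sum_pi_bern, integral_sum_pi_bern hp, sub_le_iff_le_add] at hvar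
  exact hvar

theorem integrable_quadratic_sum_pi_bern (c₀ c₁ c₂ : ℝ) :
    Integrable (fun h => c₀ + c₁ * ∑ i, h i + c₂ * (∑ i, h i) ^ 2)
      (Measure.pi fun _ : ι => bern p) :=
  ((integrable_const c₀).add ((memLp_two_sum_pi_bern.integrable one_le_two).const_mul c₁)).add
    (memLp_two_sum_pi_bern.integrable_sq.const_mul c₂)

theorem integral_quadratic_sum_pi_bern_le (hp : p ≤ 1) (c₀ c₁ : ℝ) {c₂ : ℝ} (hc₂ : 0 ≤ c₂) :
    ∫ h, (c₀ + c₁ * ∑ i, h i + c₂ * (∑ i, h i) ^ 2) ∂Measure.pi (fun _ : ι => bern p)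
      ≤ c₀ + c₁ * (Fintype.card ι * p.toReal)
        + c₂ * (Fintype.card ι * p.toReal + (Fintype.card ι * p.toReal) ^ 2) := by
  have hH : Integrable (fun h => c₁ * ∑ i, h i) (Measure.pi fun _ : ι => bern p) :=
    (memLp_two_sum_pi_bern.integrable one_le_two).const_mul c₁
  have haffine : Integrable (fun h => c₀ + c₁ * ∑ i, h i) (Measure.pi fun _ : ι => bern p) :=
    (integrable_const c₀).add hH
  rw [integral_add haffine (memLp_two_sum_pi_bern.integrable_sq.const_mul c₂),
    integral_add (integrable_const c₀) hH, integral_const_mul, integral_const_mul,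
    integral_const, probReal_univ, one_smul, integral_sum_pi_bern hp]
  gcongr
  exact integral_sum_sq_pi_bern_le hp

theorem integral_quadratic_sum_pi_bern_inv_natCast_le (K : ℕ) [NeZero K] (c₀ c₁ : ℝ) {c₂ : ℝ}
    (hc₂ : 0 ≤ c₂) :
    ∫ h, (c₀ + c₁ * ∑ i, h i + c₂ * (∑ i, h i) ^ 2)
        ∂Measure.pi (fun _ : Fin K => bern (K : ℝ≥0∞)⁻¹) ≤ c₀ + c₁ + 2 * c₂ := by
  have hmean : (Fintype.card (Fin K) : ℝ) * ((K : ℝ≥0∞)⁻¹).toReal = 1 := by simp [NeZero.ne K]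
  refine (integral_quadratic_sum_pi_bern_le
    (ENNReal.inv_le_one.2 <| Nat.one_le_cast.2 <| NeZero.one_le) c₀ c₁ hc₂).trans_eq ?_
  rw [hmean]
  ring

end Bernoulli

section SecondMoment

variable {α : Type*} [MeasurableSpace α] {μ : Measure α} [IsProbabilityMeasure μ]

theorem integrable_and_integral_le_sqrt {f R : α → ℝ} (hf : AEStronglyMeasurable f μ)
    (hR : Integrable R μ) (hle : ∀ᵐ x ∂μ, f x ^ 2 ≤ R x) :
    Integrable f μ ∧ ∫ x, f x ∂μ ≤ √(∫ x, R x ∂μ) := by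
  have hsq : Integrable (fun x => f x ^ 2) μ := by
    refine hR.mono' (hf.pow 2) ?_
    filter_upwards [hle] with x hx
    rwa [Real.norm_of_nonneg (sq_nonneg _)]
  have hL2 : MemLp f 2 μ := (memLp_two_iff_integrable_sq hf).2 hsq
  exact ⟨hL2.integrable one_le_two, Real.le_sqrt_of_sq_le <|
    (sq_integral_le_integral_sq hL2).trans (integral_mono_ae hsq hR hle)⟩

end SecondMoment

section RandomMidpoint

variable {E : Type*} [NormedAddCommGroup E] [InnerProductSpace ℝ E]

/-- The vector field `b` is `m`-strongly monotone and `L`-Lipschitz, as is the gradient of an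
`m`-strongly convex function with `L`-Lipschitz gradient. -/
structure StronglyMonotoneLipschitz (b : E → E) (m L : ℝ) : Prop where
  le_inner : ∀ x y, m * ‖x - y‖ ^ 2 ≤ ⟪x - y, b x - b y⟫
  norm_map_sub_le : ∀ x y, ‖b x - b y‖ ≤ L * ‖x - y‖

/-- The `i`-th random midpoint of the PRLMC scheme for the Langevin dynamics with drift `-b`. -/
def randomMidpoint (b : E → E) (η : ℝ) (K : ℕ) (x : E) (g : Fin K → E) (i : Fin K) : E :=
  x - ((i : ℝ) * η / (K : ℝ)) • b x + √(2 * (i : ℝ) * η / (K : ℝ)) • g i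

/-- One PRLMC step for the drift `-b` without its driving Gaussian, as a function of the state, the
Bernoulli variables and the midpoint Gaussians. -/
def randomMidpointDrift (b : E → E) (η : ℝ) (K : ℕ) (q : E × (Fin K → ℝ) × (Fin K → E)) : E :=
  q.1 - η • b q.1 + η • ∑ i, q.2.1 i • (b q.1 - b (randomMidpoint b η K q.1 q.2.2 i))

variable {b : E → E} {m L η : ℝ} {K : ℕ}

theorem randomMidpoint_sub_randomMidpoint (x y : E) (g : Fin K → E) (i : Fin K) :
    randomMidpoint b η K x g i - randomMidpoint b η K y g i
      = (x - y) - ((i : ℝ) * η / K) • (b x - b y) := by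
  simp only [randomMidpoint]
  module

theorem randomMidpointDrift_sub_randomMidpointDrift (x y : E) (h : Fin K → ℝ) (g : Fin K → E) :
    randomMidpointDrift b η K (x, h, g) - randomMidpointDrift b η K (y, h, g)
      = (x - y) - η • ((1 - ∑ i, h i) • (b x - b y)
        + ∑ i, h i • (b (randomMidpoint b η K x g i) - b (randomMidpoint b η K y g i))) := by
  simp only [randomMidpointDrift, smul_sub, Finset.sum_sub_distrib, ← Finset.sum_smul]
  module

theorem midpoint_weight_mem_Icc (hη : 0 ≤ η) (i : Fin K) : (i : ℝ) * η / K ∈ Set.Icc 0 η := by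
  have hi : (i : ℝ) ≤ K := by exact_mod_cast i.2.le
  refine ⟨by positivity, div_le_of_le_mul₀ (Nat.cast_nonneg K) hη ?_⟩
  rw [mul_comm]
  gcongr

namespace StronglyMonotoneLipschitz

theorem continuous (hb : StronglyMonotoneLipschitz b m L) : Continuous b := by
  refine (LipschitzWith.of_dist_le' (K := L) fun x y => ?_).continuous
  simpa only [dist_eq_norm] using hb.norm_map_sub_le x y

theorem inner_le (hb : StronglyMonotoneLipschitz b m L) (x y : E) :
    ⟪x - y, b x - b y⟫ ≤ L * ‖x - y‖ ^ 2 := by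
  calc ⟪x - y, b x - b y⟫ ≤ ‖x - y‖ * ‖b x - b y‖ := real_inner_le_norm _ _
    _ ≤ ‖x - y‖ * (L * ‖x - y‖) := by gcongr; exact hb.norm_map_sub_le x y
    _ = L * ‖x - y‖ ^ 2 := by ring

section EulerStep

variable {x y u v : E} {s : ℝ}

theorem norm_map_sub_le_of_euler_step (hb : StronglyMonotoneLipschitz b m L) (hL : 0 ≤ L)
    (hs : 0 ≤ s) (hsL : s * L ≤ 1) (huv : u - v = (x - y) - s • (b x - b y)) :
    ‖b u - b v‖ ≤ 2 * L * ‖x - y‖ := by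
  have huv_norm : ‖u - v‖ ≤ 2 * ‖x - y‖ := by
    calc ‖u - v‖ ≤ ‖x - y‖ + s * ‖b x - b y‖ := by
          rw [huv, ← norm_smul_of_nonneg hs]
          exact norm_sub_le _ _
      _ ≤ ‖x - y‖ + s * (L * ‖x - y‖) := by gcongr; exact hb.norm_map_sub_le x y
      _ = ‖x - y‖ + s * L * ‖x - y‖ := by ring
      _ ≤ ‖x - y‖ + 1 * ‖x - y‖ := by gcongr
      _ = 2 * ‖x - y‖ := by ring
  calc ‖b u - b v‖ ≤ L * ‖u - v‖ := hb.norm_map_sub_le u v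
    _ ≤ L * (2 * ‖x - y‖) := by gcongr
    _ = 2 * L * ‖x - y‖ := by ring

theorem le_inner_of_euler_step (hb : StronglyMonotoneLipschitz b m L) (hm : 0 ≤ m) (hL : 0 ≤ L)
    (hs : 0 ≤ s) (hsL : s * L ≤ 1) (huv : u - v = (x - y) - s • (b x - b y)) :
    (m - 4 * s * L ^ 2) * ‖x - y‖ ^ 2 ≤ ⟪x - y, b u - b v⟫ := by
  have hinner : -(2 * L ^ 2 * ‖x - y‖ ^ 2) ≤ ⟪b x - b y, b u - b v⟫ := by
    refine neg_le_of_abs_le ((abs_real_inner_le_norm _ _).trans ?_)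
    calc ‖b x - b y‖ * ‖b u - b v‖ ≤ (L * ‖x - y‖) * (2 * L * ‖x - y‖) := by
          gcongr
          · exact hb.norm_map_sub_le x y
          · exact hb.norm_map_sub_le_of_euler_step hL hs hsL huv
      _ = 2 * L ^ 2 * ‖x - y‖ ^ 2 := by ring
  have huv_sq : ‖x - y‖ ^ 2 - 2 * s * (L * ‖x - y‖ ^ 2) ≤ ‖u - v‖ ^ 2 := by
    rw [huv, norm_sub_sq_real (x - y), real_inner_smul_right]
    have := mul_le_mul_of_nonneg_left (hb.inner_le x y) hs
    linarith [sq_nonneg ‖s • (b x - b y)‖]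
  have hmL : m * ‖x - y‖ ^ 2 ≤ L * ‖x - y‖ ^ 2 := (hb.le_inner x y).trans (hb.inner_le x y)
  calc (m - 4 * s * L ^ 2) * ‖x - y‖ ^ 2
      = m * ‖x - y‖ ^ 2 - 2 * s * L * (L * ‖x - y‖ ^ 2) - s * (2 * L ^ 2 * ‖x - y‖ ^ 2) := by ring
    _ ≤ m * ‖x - y‖ ^ 2 - 2 * s * L * (m * ‖x - y‖ ^ 2) - s * (2 * L ^ 2 * ‖x - y‖ ^ 2) := by
        gcongr
    _ = m * (‖x - y‖ ^ 2 - 2 * s * (L * ‖x - y‖ ^ 2)) + s * -(2 * L ^ 2 * ‖x - y‖ ^ 2) := by ring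
    _ ≤ m * ‖u - v‖ ^ 2 + s * ⟪b x - b y, b u - b v⟫ := by gcongr
    _ ≤ ⟪u - v, b u - b v⟫ + s * ⟪b x - b y, b u - b v⟫ := by gcongr; exact hb.le_inner u v
    _ = ⟪x - y, b u - b v⟫ := by rw [huv, inner_sub_left, real_inner_smul_left]; ring

end EulerStep

variable (hb : StronglyMonotoneLipschitz b m L) (hη : 0 ≤ η) (hηL : η * L ≤ 1) (x y : E)

include hb hη hηL

theorem norm_map_randomMidpoint_sub_le (hL : 0 ≤ L) (g : Fin K → E) (i : Fin K) :
    ‖b (randomMidpoint b η K x g i) - b (randomMidpoint b η K y g i)‖ ≤ 2 * L * ‖x - y‖ := by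
  obtain ⟨hs₀, hs⟩ := midpoint_weight_mem_Icc hη i
  exact hb.norm_map_sub_le_of_euler_step hL hs₀ ((mul_le_mul_of_nonneg_right hs hL).trans hηL)
    (randomMidpoint_sub_randomMidpoint x y g i)

theorem le_inner_randomMidpoint (hm : 0 ≤ m) (hL : 0 ≤ L) (g : Fin K → E) (i : Fin K) :
    (m - 4 * η * L ^ 2) * ‖x - y‖ ^ 2
      ≤ ⟪x - y, b (randomMidpoint b η K x g i) - b (randomMidpoint b η K y g i)⟫ := by
  obtain ⟨hs₀, hs⟩ := midpoint_weight_mem_Icc hη i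
  refine le_trans ?_ (hb.le_inner_of_euler_step hm hL hs₀
    ((mul_le_mul_of_nonneg_right hs hL).trans hηL) (randomMidpoint_sub_randomMidpoint x y g i))
  gcongr

theorem norm_randomMidpointDrift_sub_sq_le (hm : 0 ≤ m) (hL : 0 ≤ L) {h : Fin K → ℝ}
    (hh : ∀ i, 0 ≤ h i) (g : Fin K → E) :
    ‖randomMidpointDrift b η K (x, h, g) - randomMidpointDrift b η K (y, h, g)‖ ^ 2
      ≤ ‖x - y‖ ^ 2 - 2 * η * ((1 - ∑ i, h i) * ⟪x - y, b x - b y⟫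
          + (∑ i, h i) * ((m - 4 * η * L ^ 2) * ‖x - y‖ ^ 2))
        + η ^ 2 * (L * ‖x - y‖ * (1 + 3 * ∑ i, h i)) ^ 2 := by
  rw [randomMidpointDrift_sub_randomMidpointDrift]
  set H := ∑ i, h i with hH
  have hH₀ : 0 ≤ H := Finset.sum_nonneg fun i _ => hh i
  set S := ∑ i, h i • (b (randomMidpoint b η K x g i) - b (randomMidpoint b η K y g i)) with hS
  have hS_norm : ‖S‖ ≤ H * (2 * L * ‖x - y‖) := by
    rw [hS, hH, Finset.sum_mul]
    refine norm_sum_le_of_le _ fun i _ => ?_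
    rw [norm_smul_of_nonneg (hh i)]
    gcongr
    · exact hh i
    · exact hb.norm_map_randomMidpoint_sub_le hη hηL x y hL g i
  have hS_inner : H * ((m - 4 * η * L ^ 2) * ‖x - y‖ ^ 2) ≤ ⟪x - y, S⟫ := by
    rw [hS, hH, Finset.sum_mul, inner_sum]
    refine Finset.sum_le_sum fun i _ => ?_
    rw [real_inner_smul_right]
    exact mul_le_mul_of_nonneg_left (hb.le_inner_randomMidpoint hη hηL x y hm hL g i) (hh i)
  have hV_norm : ‖(1 - H) • (b x - b y) + S‖ ≤ L * ‖x - y‖ * (1 + 3 * H) := by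
    have hH_abs : |1 - H| ≤ 1 + H := abs_le.2 ⟨by linarith, by linarith⟩
    calc ‖(1 - H) • (b x - b y) + S‖ ≤ |1 - H| * ‖b x - b y‖ + ‖S‖ :=
          norm_add_le_of_le (norm_smul_le _ _) le_rfl
      _ ≤ (1 + H) * (L * ‖x - y‖) + H * (2 * L * ‖x - y‖) := by
          gcongr
          exact hb.norm_map_sub_le x y
      _ = L * ‖x - y‖ * (1 + 3 * H) := by ring
  calc ‖(x - y) - η • ((1 - H) • (b x - b y) + S)‖ ^ 2
      = ‖x - y‖ ^ 2 - 2 * η * ((1 - H) * ⟪x - y, b x - b y⟫ + ⟪x - y, S⟫)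
          + η ^ 2 * ‖(1 - H) • (b x - b y) + S‖ ^ 2 := by
        rw [norm_sub_sq_real, real_inner_smul_right, inner_add_right, real_inner_smul_right,
          norm_smul_of_nonneg hη]
        ring
    _ ≤ _ := by gcongr

end StronglyMonotoneLipschitz

end RandomMidpoint

section RandomMidpointKernel

/-- The law of the Bernoulli variables and midpoint Gaussians of one PRLMC step. -/
def midpointNoise (d K : ℕ) : Measure ((Fin K → ℝ) × (Fin K → Euc d)) :=
  (Measure.pi fun _ => bern (K : ℝ≥0∞)⁻¹).prod (Measure.pi fun _ => _root_.stdGaussian d)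

variable {d K : ℕ} {b : Euc d → Euc d} {m L η : ℝ}

instance isProbabilityMeasure_midpointNoise [NeZero K] :
    IsProbabilityMeasure (midpointNoise d K) := by
  unfold midpointNoise
  infer_instance

theorem measurable_randomMidpointDrift (hb : Measurable b) :
    Measurable (randomMidpointDrift b η K) := by
  unfold randomMidpointDrift randomMidpoint
  fun_prop

theorem StronglyMonotoneLipschitz.integrable_comp (hb : StronglyMonotoneLipschitz b m L)
    {α : Type*} [MeasurableSpace α] {μ : Measure α} [IsFiniteMeasure μ] {f : α → Euc d}
    (hf : Integrable f μ) : Integrable (fun a => b (f a)) μ := by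
  refine ((hf.norm.const_mul L).add (integrable_const ‖b 0‖)).mono'
    (hb.continuous.comp_aestronglyMeasurable hf.1) (.of_forall fun a => ?_)
  have h0 := hb.norm_map_sub_le (f a) 0
  rw [sub_zero] at h0
  exact (norm_le_norm_sub_add _ (b 0)).trans (add_le_add_left h0 _)

variable [NeZero K]

theorem StronglyMonotoneLipschitz.integrable_randomMidpointDrift
    (hb : StronglyMonotoneLipschitz b m L) (η : ℝ) (x : Euc d) :
    Integrable (fun ω => randomMidpointDrift b η K (x, ω)) (midpointNoise d K) := by
  have hmid (i : Fin K) : Integrable (fun g => randomMidpoint b η K x g i)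
      (Measure.pi fun _ => _root_.stdGaussian d) :=
    (integrable_const _).add <| Integrable.smul √(2 * (i : ℝ) * η / K) <| integrable_comp_eval
      (μ := fun _ : Fin K => _root_.stdGaussian d) (f := fun z => z) IsGaussian.integrable_fun_id
  have hterm (i : Fin K) : Integrable
      (fun ω => ω.1 i • (b x - b (randomMidpoint b η K x ω.2 i))) (midpointNoise d K) :=
    ((memLp_two_eval_pi_bern i).integrable one_le_two).smul_prod
      ((integrable_const _).sub (hb.integrable_comp (hmid i)))
  exact (integrable_const (x - η • b x)).add <| Integrable.smul η <|
    integrable_finsetSum _ fun i _ => hterm i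

theorem StronglyMonotoneLipschitz.lipschitzInMean_randomMidpointDrift
    (hb : StronglyMonotoneLipschitz b m L) (hm : 0 ≤ m) (hL : 0 ≤ L) (hη : 0 ≤ η)
    (hηL : η * L ≤ 1) (hηm : 33 * η * L ^ 2 ≤ m) :
    LipschitzInMean (midpointNoise d K) (randomMidpointDrift b η K)
      (NNReal.sqrt (Real.toNNReal (1 - η * m))) := by
  intro x y
  set c₀ := (1 + η ^ 2 * L ^ 2) * ‖x - y‖ ^ 2 - 2 * η * ⟪x - y, b x - b y⟫ with hc₀
  set c₁ := 2 * η * ⟪x - y, b x - b y⟫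
    + (6 * η ^ 2 * L ^ 2 - 2 * η * (m - 4 * η * L ^ 2)) * ‖x - y‖ ^ 2 with hc₁
  set c₂ := 9 * η ^ 2 * L ^ 2 * ‖x - y‖ ^ 2 with hc₂
  set R : (Fin K → ℝ) → ℝ := fun h => c₀ + c₁ * ∑ i, h i + c₂ * (∑ i, h i) ^ 2 with hR
  have hmeas (x : Euc d) : Measurable fun ω => randomMidpointDrift b η K (x, ω) :=
    (measurable_randomMidpointDrift hb.continuous.measurable).comp measurable_prodMk_left
  have hle : ∀ᵐ ω ∂midpointNoise d K,
      dist (randomMidpointDrift b η K (x, ω)) (randomMidpointDrift b η K (y, ω)) ^ 2 ≤ R ω.1 := by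
    filter_upwards [Measure.quasiMeasurePreserving_fst.ae ae_pi_bern_mem_Icc] with ω hω
    rw [dist_eq_norm]
    refine (hb.norm_randomMidpointDrift_sub_sq_le hη hηL x y hm hL (fun i => (hω i).1) ω.2).trans_eq
      ?_
    simp only [hR, hc₀, hc₁, hc₂]
    ring
  -- The `K` Bernoulli variables sum to one in mean, which cancels `⟪x - y, b x - b y⟫`.
  have hR_int : ∫ ω, R ω.1 ∂midpointNoise d K ≤ (1 - η * m) * ‖x - y‖ ^ 2 := by
    rw [midpointNoise, integral_fun_fst R, probReal_univ, one_smul]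
    calc ∫ h, R h ∂Measure.pi (fun _ => bern (K : ℝ≥0∞)⁻¹) ≤ c₀ + c₁ + 2 * c₂ :=
          integral_quadratic_sum_pi_bern_inv_natCast_le K c₀ c₁ (by positivity)
      _ = (1 - 2 * η * m + η * (33 * η * L ^ 2)) * ‖x - y‖ ^ 2 := by
          rw [hc₀, hc₁, hc₂]
          ring
      _ ≤ (1 - 2 * η * m + η * m) * ‖x - y‖ ^ 2 := by gcongr
      _ = (1 - η * m) * ‖x - y‖ ^ 2 := by ring
  obtain ⟨hint, hint_le⟩ := integrable_and_integral_le_sqrt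
    ((hmeas x).dist (hmeas y)).aestronglyMeasurable
    ((integrable_quadratic_sum_pi_bern c₀ c₁ c₂).comp_fst _) hle
  refine ⟨hint, hint_le.trans ((Real.sqrt_le_sqrt hR_int).trans_eq ?_)⟩
  rw [Real.sqrt_mul' _ (sq_nonneg _), Real.sqrt_sq (norm_nonneg _), dist_eq_norm, Real.sqrt]

/-- The transition kernel of the PRLMC chain for the Langevin dynamics with drift `-b`. -/
def randomMidpointKernel (b : Euc d → Euc d) (η : ℝ) (K : ℕ) : Kernel (Euc d) (Euc d) :=
  gaussianStep (midpointNoise d K) (randomMidpointDrift b η K) √(2 * η)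

theorem isMarkovKernel_randomMidpointKernel (hb : Measurable b) :
    IsMarkovKernel (randomMidpointKernel b η K) :=
  isMarkovKernel_gaussianStep (measurable_randomMidpointDrift hb)

theorem mul_lt_one_of_mul_sq_le (hm : 0 < m) (hmL : m ≤ L) (hη : 33 * η * L ^ 2 ≤ m) :
    η * L < 1 := by
  have hL : 0 < L := hm.trans_le hmL
  have hmul : 33 * (η * L) * L ≤ 1 * L := by linarith
  linarith [le_of_mul_le_mul_right hmul hL]

theorem StronglyMonotoneLipschitz.exists_isGeometricallyErgodic
    (hb : StronglyMonotoneLipschitz b m L) (hm : 0 < m) (hmL : m ≤ L) (hη : 0 < η)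
    (hηm : 33 * η * L ^ 2 ≤ m) :
    ∃ π, IsProbabilityMeasure π ∧
      IsGeometricallyErgodic (randomMidpointKernel b η K) π √(1 - η * m) ∧
      Kernel.Invariant (randomMidpointKernel b η K) π := by
  have hηL : η * L < 1 := mul_lt_one_of_mul_sq_le hm hmL hηm
  have hrate : 0 < 1 - η * m := sub_pos.2 ((mul_le_mul_of_nonneg_left hmL hη.le).trans_lt hηL)
  have hσ : 0 < √(2 * η) := by positivity
  have hlip := hb.lipschitzInMean_randomMidpointDrift (K := K) hm.le (hm.le.trans hmL) hη.le
    hηL.le hηm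
  rw [randomMidpointKernel, ← Real.coe_toNNReal _ hrate.le, ← Real.coe_sqrt]
  refine hlip.exists_isGeometricallyErgodic
    (measurable_randomMidpointDrift hb.continuous.measurable) ?_ ?_ hσ
    (hb.integrable_randomMidpointDrift η 0)
  · rwa [NNReal.sqrt_pos, Real.toNNReal_pos]
  · rw [← NNReal.sqrt_one, NNReal.sqrt_lt_sqrt, Real.toNNReal_lt_one]
    linarith [mul_pos hη hm]

end RandomMidpointKernel

namespace StrongAssumption

variable {d : ℕ} {U : Euc d → ℝ} {m L : ℝ}

theorem le_inner (hU : StrongAssumption U m L) (x y : Euc d) :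
    m * ‖x - y‖ ^ 2 ≤ ⟪x - y, gradient U x - gradient U y⟫ := by
  obtain ⟨_, _, _, hquad, _⟩ := hU
  have hxy := (hquad x y).1
  have hyx := (hquad y x).1
  rw [norm_sub_rev y x] at hyx
  have hinner : ⟪x - y, gradient U x - gradient U y⟫
      = -⟪gradient U x, y - x⟫ - ⟪gradient U y, x - y⟫ := by
    rw [← neg_sub x y, inner_neg_right, neg_neg, inner_sub_right,
      real_inner_comm (gradient U x), real_inner_comm (gradient U y)]
  rw [hinner]
  linarith

-- Compare both quadratic bounds at the point `y - L⁻¹ • (∇U(y) - ∇U(x))`.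
theorem norm_gradient_sub_le (hU : StrongAssumption U m L) (x y : Euc d) :
    ‖gradient U x - gradient U y‖ ≤ L * ‖x - y‖ := by
  obtain ⟨_, hm, hmL, hquad, _⟩ := hU
  have hL : 0 < L := hm.trans_le hmL
  set G := gradient U y - gradient U x with hG
  set w := y - L⁻¹ • G with hw
  have hwy : w - y = -(L⁻¹ • G) := by rw [hw]; abel
  have hwx : w - x = (y - x) - L⁻¹ • G := by rw [hw]; abel
  have hGG : ⟪gradient U y, G⟫ - ⟪gradient U x, G⟫ = ‖G‖ ^ 2 := by
    rw [← inner_sub_left, ← hG, real_inner_self_eq_norm_sq]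
  have hlower : 0 ≤ U w - U x - (⟪gradient U x, y - x⟫ - L⁻¹ * ⟪gradient U x, G⟫) := by
    have h := (hquad x w).1
    rw [hwx, inner_sub_right, real_inner_smul_right] at h
    exact le_trans (by positivity) h
  have hupper : U w - U y + L⁻¹ * ⟪gradient U y, G⟫ ≤ L / 2 * (L⁻¹ * ‖G‖) ^ 2 := by
    have h := (hquad y w).2
    rwa [norm_sub_rev, hwy, inner_neg_right, real_inner_smul_right, sub_neg_eq_add, norm_neg,
      norm_smul_of_nonneg (inv_nonneg.2 hL.le)] at h
  have hsq : ‖G‖ ^ 2 ≤ (L * ‖x - y‖) ^ 2 := by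
    calc ‖G‖ ^ 2 = 2 * L * (L⁻¹ * ‖G‖ ^ 2 - L / 2 * (L⁻¹ * ‖G‖) ^ 2) := by field_simp; ring
      _ ≤ 2 * L * (L / 2 * ‖x - y‖ ^ 2) := by
          gcongr
          rw [← hGG]
          linarith [(hquad x y).2]
      _ = (L * ‖x - y‖) ^ 2 := by ring
  rw [norm_sub_rev]
  exact le_of_sq_le_sq hsq (by positivity)

theorem stronglyMonotoneLipschitz (hU : StrongAssumption U m L) :
    StronglyMonotoneLipschitz (gradient U) m L :=
  ⟨hU.le_inner, hU.norm_gradient_sub_le⟩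

end StrongAssumption

section PRLMC

variable {d K : ℕ} {U : Euc d → ℝ} {η : ℝ}

theorem coe_randomMidpointKernel_gradient [NeZero K] (hU : Measurable (gradient U)) :
    ⇑(randomMidpointKernel (gradient U) η K) = prlmcKernel U η K := by
  ext1 x
  have hdrift := measurable_randomMidpointDrift (η := η) (K := K) hU
  have hstep : Measurable fun r : (Fin K → ℝ) × (Fin K → Euc d) × Euc d =>
      prlmcStep U η K x r.1 r.2.1 r.2.2 := by
    unfold prlmcStep prlmcMid
    fun_prop
  rw [randomMidpointKernel, gaussianStep_apply hdrift, prlmcKernel, prlmcNoise, midpointNoise,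
    ← Measure.prodAssoc_prod, Measure.map_map hstep (by fun_prop)]
  rfl

theorem prlmcIter_dirac_eq_pow {κ : Kernel (Euc d) (Euc d)} (hκ : ⇑κ = prlmcKernel U η K)
    (x : Euc d) (n : ℕ) : prlmcIter U η K (Measure.dirac x) n = (κ ^ n) x := by
  induction n with
  | zero => rfl
  | succ n ih =>
    rw [prlmcIter, ih, ← hκ, pow_succ']
    rfl

end PRLMC

theorem stmt1_general (m L : ℝ) (hm : 0 < m) (hmL : m ≤ L) :
    ∃ η₀ : ℝ, η₀ ∈ Set.Ioo (0 : ℝ) 1 ∧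
      ∀ (d K : ℕ) [NeZero K], ∀ b : Euc d → Euc d, StronglyMonotoneLipschitz b m L →
        ∀ η : ℝ, η ∈ Set.Ioo (0 : ℝ) η₀ →
          ∃ π : Measure (Euc d), IsProbabilityMeasure π ∧
            Kernel.Invariant (randomMidpointKernel b η K) π ∧
            (∀ μ : Measure (Euc d), IsProbabilityMeasure μ →
              Kernel.Invariant (randomMidpointKernel b η K) μ → μ = π) ∧
            ∃ δ : ℝ, 1 < δ ∧ ∀ x : Euc d,
              (∑' n : ℕ, ENNReal.ofReal (δ ^ n) *
                  dTV ((randomMidpointKernel b η K ^ n) x) π) < ⊤ ∧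
              Tendsto (fun n : ℕ => ENNReal.ofReal (δ ^ n) *
                  dTV ((randomMidpointKernel b η K ^ n) x) π) atTop (𝓝 0) := by
  have hL : 0 < L := hm.trans_le hmL
  refine ⟨min (1 / 2) (m / (33 * L ^ 2)), ⟨by positivity, min_lt_of_left_lt one_half_lt_one⟩, ?_⟩
  intro d K _ b hb η ⟨hη₀, hη⟩
  have hηm : 33 * η * L ^ 2 ≤ m := by
    have hle := (le_div_iff₀ (by positivity)).1 (hη.le.trans (min_le_right _ _))
    linarith
  have := isMarkovKernel_randomMidpointKernel (η := η) (K := K) hb.continuous.measurable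
  have hr : √(1 - η * m) < 1 := by
    rw [Real.sqrt_lt' one_pos]
    linarith [mul_pos hη₀ hm]
  obtain ⟨π, hπ, herg, hinv⟩ := hb.exists_isGeometricallyErgodic (K := K) hm hmL hη₀ hηm
  obtain ⟨δ, hδ, hsum⟩ := herg.exists_tsum_dTV_lt_top (Real.sqrt_nonneg _) hr
  exact ⟨π, hπ, hinv, fun μ _ hμ => herg.eq_of_invariant (Real.sqrt_nonneg _) hr hμ, δ, hδ,
    fun x => ⟨hsum x, ENNReal.tendsto_atTop_zero_of_tsum_ne_top (hsum x).ne⟩⟩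

/-- Under Assumption 1, for any step size `η ∈ (0, η₀)` (below the threshold
where a unique stationary distribution `π_η` exists) and any initial state `x`, there is a
constant `δ > 1` (depending on `η`) with `∑_{n} δ^n d_TV(L(X̃_n), π_η) < ∞`; consequently
`d_TV(L(X̃_n), π_η) = o(δ^{-n})`, i.e. `δ^n d_TV(L(X̃_n), π_η) → 0`. -/
theorem stmt1 (m L : ℝ) (hm : 0 < m) (hmL : m ≤ L) :
    ∃ η₀ : ℝ, η₀ ∈ Set.Ioo (0 : ℝ) 1 ∧
      ∀ (d K : ℕ), 1 ≤ K → ∀ U : Euc d → ℝ, StrongAssumption U m L →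
        ∀ η : ℝ, η ∈ Set.Ioo (0 : ℝ) η₀ →
          ∃ πη : Measure (Euc d), IsProbabilityMeasure πη ∧
            πη.bind (prlmcKernel U η K) = πη ∧
            (∀ μ : Measure (Euc d), IsProbabilityMeasure μ →
              μ.bind (prlmcKernel U η K) = μ → μ = πη) ∧
            ∃ δ : ℝ, 1 < δ ∧ ∀ x : Euc d,
              (∑' n : ℕ, ENNReal.ofReal (δ ^ n) *
                  dTV (prlmcIter U η K (Measure.dirac x) n) πη) < ⊤ ∧
              Tendsto (fun n : ℕ => ENNReal.ofReal (δ ^ n) *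
                  dTV (prlmcIter U η K (Measure.dirac x) n) πη) atTop (𝓝 0) := by
  obtain ⟨η₀, hη₀, hmain⟩ := stmt1_general m L hm hmL
  refine ⟨η₀, hη₀, fun d K hK U hU η hη => ?_⟩
  have : NeZero K := ⟨by omega⟩
  have hb := hU.stronglyMonotoneLipschitz
  have hκ := coe_randomMidpointKernel_gradient (η := η) (K := K) hb.continuous.measurable
  simpa only [Kernel.Invariant, hκ, ← prlmcIter_dirac_eq_pow hκ] using hmain d K _ hb η hη

end
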